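/- Let ν ≥ 1 be an integer and (M_k)_{k∈ℕ} a sequence of positive reals satisfying (M.0), (M.1), (M.2) and (G), with associated function M(r) := sup_{k∈ℕ} log(r^{νk}/M_{νk}). Let (λ_j)_{j≥1} be positive reals with λ_j ≥ λ₁ > 0 for all j and ∑_{j≥1} λ_j^{−p₀} < ∞ for some p₀ ∈ ℕ, and let (a_j)_{j≥1} be nonnegative reals for which there exist C > 0 and L > 0 with a_j ≤ C · exp(−M(L·λ_j^{1/ν})) for all j. Then there exist constants C̃ > 0 and h̃ > 0 such that for every m ∈ ℕ: ∑_{j≥1} λ_j^{2m} a_j² ≤ C̃² · h̃^{2νm} · M_{νm}². -/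

import Mathlib

/-- The associated function `M(r) = sup_{k ∈ ℕ} log ( r^{νk} / M_{νk} )`. -/
noncomputable def assocM (ν : ℕ) (Mk : ℕ → ℝ) (r : ℝ) : ℝ :=
  ⨆ k : ℕ, Real.log (r ^ (ν * k) / Mk (ν * k))

/-!
For every `n`, the definition of the associated function gives
`x ^ n * exp (-M(L x^{1/ν})) ≤ M_{νn} / L^{νn}`. Taking `n = m + p₀` bounds `λ_j ^ m * a_j` by a
constant multiple of the summable sequence `λ_j ^ (-p₀)`; iterating (M.1) `ν p₀` times replaces
the weight `M_{ν(m + p₀)}` in that constant by `M_{νm}`, at geometric cost in `m`.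
-/

/-- The value `M(r)` of the associated function is finite. The real supremum in `assocM` is `0` by
convention when this fails. -/
def AssocMFinite (ν : ℕ) (M : ℕ → ℝ) (r : ℝ) : Prop :=
  BddAbove (Set.range fun k : ℕ => Real.log (r ^ (ν * k) / M (ν * k)))

section WeightSequence

variable {M : ℕ → ℝ}

theorem pow_div_le_mul_exp_of_factorial_le {C₀ l r : ℝ} {k : ℕ} (hM : 0 < M k) (hl : 0 < l)
    (hG : (k.factorial : ℝ) ≤ C₀ * l ^ k * M k) (hr : 0 ≤ r) :
    r ^ k / M k ≤ C₀ * Real.exp (l * r) := by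
  have h_exp : (l * r) ^ k ≤ Real.exp (l * r) * k.factorial :=
    (div_le_iff₀ (by positivity)).1 (Real.pow_div_factorial_le_exp (l * r) (by positivity) k)
  rw [div_le_iff₀ hM]
  refine le_of_mul_le_mul_left ?_ (pow_pos hl k)
  calc l ^ k * r ^ k = (l * r) ^ k := (mul_pow l r k).symm
    _ ≤ Real.exp (l * r) * k.factorial := h_exp
    _ ≤ Real.exp (l * r) * (C₀ * l ^ k * M k) := by gcongr
    _ = l ^ k * (C₀ * Real.exp (l * r) * M k) := by ring

theorem assocMFinite_of_factorial_le (ν : ℕ) (hM : ∀ k, 0 < M k) {C₀ l : ℝ} (hl : 0 < l)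
    (hG : ∀ k : ℕ, (k.factorial : ℝ) ≤ C₀ * l ^ k * M k) {r : ℝ} (hr : 0 ≤ r) :
    AssocMFinite ν M r := by
  refine ⟨C₀ * Real.exp (l * r), Set.forall_mem_range.2 fun k => ?_⟩
  exact (Real.log_le_self (div_nonneg (pow_nonneg hr _) (hM _).le)).trans
    (pow_div_le_mul_exp_of_factorial_le (hM _) hl (hG _) hr)

theorem exp_neg_assocM_le {ν k : ℕ} {r : ℝ} (hM : 0 < M (ν * k)) (hr : 0 < r)
    (hfin : AssocMFinite ν M r) :
    Real.exp (-assocM ν M r) ≤ M (ν * k) / r ^ (ν * k) := by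
  calc Real.exp (-assocM ν M r) ≤ Real.exp (-Real.log (r ^ (ν * k) / M (ν * k))) :=
        Real.exp_le_exp.2 (neg_le_neg (le_ciSup hfin k))
    _ = M (ν * k) / r ^ (ν * k) := by
        rw [Real.exp_neg, Real.exp_log (by positivity), inv_div]

theorem pow_mul_exp_neg_assocM_le {ν : ℕ} (hν : ν ≠ 0) {L x : ℝ} {n : ℕ} (hM : 0 < M (ν * n))
    (hL : 0 < L) (hx : 0 < x) (hfin : AssocMFinite ν M (L * x ^ (1 / (ν : ℝ)))) :
    x ^ n * Real.exp (-assocM ν M (L * x ^ (1 / (ν : ℝ)))) ≤ M (ν * n) / L ^ (ν * n) := by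
  have hr : 0 < L * x ^ (1 / (ν : ℝ)) := mul_pos hL (Real.rpow_pos_of_pos hx _)
  have hr_pow : (L * x ^ (1 / (ν : ℝ))) ^ (ν * n) = L ^ (ν * n) * x ^ n := by
    rw [mul_pow, pow_mul (x ^ (1 / (ν : ℝ))), one_div, Real.rpow_inv_natCast_pow hx.le hν]
  calc x ^ n * Real.exp (-assocM ν M (L * x ^ (1 / (ν : ℝ))))
      ≤ x ^ n * (M (ν * n) / (L * x ^ (1 / (ν : ℝ))) ^ (ν * n)) := by
        gcongr
        exact exp_neg_assocM_le hM hr hfin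
    _ = M (ν * n) / L ^ (ν * n) := by
        rw [hr_pow]
        field_simp

theorem apply_add_le_of_apply_succ_le {A H : ℝ} (hA : 0 ≤ A) (hH : 0 ≤ H)
    (hM1 : ∀ k : ℕ, M (k + 1) ≤ A * H ^ k * M k) (n q : ℕ) :
    M (n + q) ≤ A ^ q * H ^ q.choose 2 * (H ^ q) ^ n * M n := by
  induction q with
  | zero => simp
  | succ q ih =>
    calc M (n + (q + 1)) ≤ A * H ^ (n + q) * M (n + q) := hM1 (n + q)
      _ ≤ A * H ^ (n + q) * (A ^ q * H ^ q.choose 2 * (H ^ q) ^ n * M n) := by gcongr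
      _ = A ^ (q + 1) * H ^ (q + 1).choose 2 * (H ^ (q + 1)) ^ n * M n := by
        rw [Nat.choose_succ_succ' q 1, Nat.choose_one_right]
        ring

theorem apply_add_div_pow_le_of_apply_succ_le {A H L : ℝ} (hA : 0 ≤ A) (hH : 0 ≤ H) (hL : 0 < L)
    (hM1 : ∀ k : ℕ, M (k + 1) ≤ A * H ^ k * M k) (n q : ℕ) :
    M (n + q) / L ^ (n + q) ≤ A ^ q * H ^ q.choose 2 / L ^ q * (H ^ q / L) ^ n * M n := by
  calc M (n + q) / L ^ (n + q)
      ≤ A ^ q * H ^ q.choose 2 * (H ^ q) ^ n * M n / L ^ (n + q) := by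
        gcongr
        exact apply_add_le_of_apply_succ_le hA hH hM1 n q
    _ = A ^ q * H ^ q.choose 2 / L ^ q * (H ^ q / L) ^ n * M n := by
        rw [div_pow, pow_add]
        field_simp

end WeightSequence

section SquareSummable

variable {ι : Type*} {b c : ι → ℝ}

theorem sq_le_tsum_mul_of_abs_le (hb : Summable b) (hcb : ∀ j, |c j| ≤ b j) (j : ι) :
    c j ^ 2 ≤ (∑' i, b i) * b j := by
  have hb_nonneg : ∀ i, 0 ≤ b i := fun i => (abs_nonneg _).trans (hcb i)
  calc c j ^ 2 ≤ b j ^ 2 := sq_le_sq' (abs_le.1 (hcb j)).1 (abs_le.1 (hcb j)).2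
    _ = b j * b j := sq (b j)
    _ ≤ (∑' i, b i) * b j := by
        gcongr
        · exact hb_nonneg j
        · exact hb.le_tsum j fun i _ => hb_nonneg i

theorem summable_sq_of_abs_le (hb : Summable b) (hcb : ∀ j, |c j| ≤ b j) :
    Summable fun j => c j ^ 2 :=
  .of_nonneg_of_le (fun j => sq_nonneg (c j)) (sq_le_tsum_mul_of_abs_le hb hcb) (hb.mul_left _)

theorem tsum_sq_le_sq_tsum_of_abs_le (hb : Summable b) (hcb : ∀ j, |c j| ≤ b j) :
    ∑' j, c j ^ 2 ≤ (∑' j, b j) ^ 2 := by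
  calc ∑' j, c j ^ 2 ≤ ∑' j, (∑' i, b i) * b j :=
        (summable_sq_of_abs_le hb hcb).tsum_le_tsum (sq_le_tsum_mul_of_abs_le hb hcb)
          (hb.mul_left _)
    _ = (∑' j, b j) ^ 2 := by rw [tsum_mul_left, sq]

end SquareSummable

theorem abs_pow_mul_le_of_abs_le_exp_neg_assocM {M : ℕ → ℝ} {ν : ℕ} (hν : ν ≠ 0)
    (hM : ∀ k, 0 < M k) {A H : ℝ} (hA : 0 ≤ A) (hH : 0 ≤ H)
    (hM1 : ∀ k : ℕ, M (k + 1) ≤ A * H ^ k * M k)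
    {C L x y : ℝ} (hC : 0 ≤ C) (hL : 0 < L) (hx : 0 < x)
    (hfin : AssocMFinite ν M (L * x ^ (1 / (ν : ℝ))))
    (hy : |y| ≤ C * Real.exp (-assocM ν M (L * x ^ (1 / (ν : ℝ))))) (m p : ℕ) :
    |x ^ m * y| ≤
      C * (A ^ (ν * p) * H ^ (ν * p).choose 2 / L ^ (ν * p) * (H ^ (ν * p) / L) ^ (ν * m) *
        M (ν * m)) * (1 / x ^ p) := by
  calc |x ^ m * y| = x ^ m * |y| := by rw [abs_mul, abs_of_pos (pow_pos hx m)]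
    _ ≤ x ^ m * (C * Real.exp (-assocM ν M (L * x ^ (1 / (ν : ℝ))))) := by gcongr
    _ = C * (x ^ (m + p) * Real.exp (-assocM ν M (L * x ^ (1 / (ν : ℝ))))) * (1 / x ^ p) := by
        rw [pow_add]
        field_simp
    _ ≤ C * (M (ν * (m + p)) / L ^ (ν * (m + p))) * (1 / x ^ p) := by
        gcongr
        exact pow_mul_exp_neg_assocM_le hν (hM _) hL hx hfin
    _ ≤ _ := by
        rw [mul_add]
        gcongr
        exact apply_add_div_pow_le_of_apply_succ_le hA hH hL hM1 (ν * m) (ν * p)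

theorem stmt_9_general {ι : Type*} {ν : ℕ} (hν : ν ≠ 0) {M : ℕ → ℝ} (hM : ∀ k, 0 < M k)
    {A H : ℝ} (hA : 0 < A) (hH : 0 < H) (hM1 : ∀ k : ℕ, M (k + 1) ≤ A * H ^ k * M k)
    (hfin : ∀ r > (0 : ℝ), AssocMFinite ν M r)
    {lam a : ι → ℝ} (hlam : ∀ j, 0 < lam j) {p : ℕ} (hp : Summable fun j => 1 / lam j ^ p)
    {C L : ℝ} (hC : 0 < C) (hL : 0 < L)
    (hdecay : ∀ j, |a j| ≤ C * Real.exp (-assocM ν M (L * lam j ^ (1 / (ν : ℝ))))) :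
    ∃ C' > (0 : ℝ), ∃ h' > (0 : ℝ), ∀ m : ℕ,
      Summable (fun j => lam j ^ (2 * m) * a j ^ 2) ∧
      (∑' j, lam j ^ (2 * m) * a j ^ 2) ≤ C' ^ 2 * h' ^ (2 * ν * m) * M (ν * m) ^ 2 := by
  set S := ∑' j, 1 / lam j ^ p
  have hS : 0 ≤ S := tsum_nonneg fun j => by have := hlam j; positivity
  set D := A ^ (ν * p) * H ^ (ν * p).choose 2 / L ^ (ν * p)
  set h := H ^ (ν * p) / L
  -- `S + 1` keeps the constant positive when `ι` is empty
  refine ⟨C * D * (S + 1), by positivity, h, by positivity, fun m => ?_⟩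
  set K := C * (D * h ^ (ν * m) * M (ν * m))
  have hK : 0 < K := by have := hM (ν * m); positivity
  have h_le : ∀ j, |lam j ^ m * a j| ≤ K * (1 / lam j ^ p) := fun j =>
    abs_pow_mul_le_of_abs_le_exp_neg_assocM hν hM hA.le hH.le hM1 hC.le hL (hlam j)
      (hfin _ (mul_pos hL (Real.rpow_pos_of_pos (hlam j) _))) (hdecay j) m p
  have h_sq : ∀ j, lam j ^ (2 * m) * a j ^ 2 = (lam j ^ m * a j) ^ 2 := fun j => by ring
  simp only [h_sq]
  refine ⟨summable_sq_of_abs_le (hp.mul_left K) h_le, ?_⟩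
  calc ∑' j, (lam j ^ m * a j) ^ 2 ≤ (∑' j, K * (1 / lam j ^ p)) ^ 2 :=
        tsum_sq_le_sq_tsum_of_abs_le (hp.mul_left K) h_le
    _ = (K * S) ^ 2 := by rw [tsum_mul_left]
    _ ≤ (K * (S + 1)) ^ 2 := by gcongr; exact le_add_of_nonneg_right zero_le_one
    _ = (C * D * (S + 1)) ^ 2 * h ^ (2 * ν * m) * M (ν * m) ^ 2 := by ring

theorem stmt_9 (ν : ℕ) (hν : 1 ≤ ν) (Mk : ℕ → ℝ) (hMpos : ∀ k, 0 < Mk k)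
    (hM0 : Mk 0 = 1)
    (A H : ℝ) (hA : 1 ≤ A) (hH : 1 ≤ H)
    (hM1 : ∀ k : ℕ, Mk (k + 1) ≤ A * H ^ k * Mk k)
    (hM2 : ∀ k : ℕ, Mk (2 * k) ≤ A * H ^ (2 * k) * Mk k ^ 2)
    (hG : ∃ C₀ > (0 : ℝ), ∃ l > (0 : ℝ), ∀ k : ℕ, (k.factorial : ℝ) ≤ C₀ * l ^ k * Mk k)
    (lam a : ℕ → ℝ) (hlam : ∀ j, 0 < lam j) (hlb : ∀ j, lam 0 ≤ lam j)
    (ha : ∀ j, 0 ≤ a j)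
    (p₀ : ℕ) (hp₀ : Summable (fun j => 1 / lam j ^ p₀))
    (C L : ℝ) (hC : 0 < C) (hL : 0 < L)
    (hdecay : ∀ j, a j ≤ C * Real.exp (-(assocM ν Mk (L * lam j ^ (1 / (ν : ℝ)))))) :
    ∃ C' > (0 : ℝ), ∃ h' > (0 : ℝ), ∀ m : ℕ,
      Summable (fun j => lam j ^ (2 * m) * a j ^ 2) ∧
      (∑' j, lam j ^ (2 * m) * a j ^ 2) ≤ C' ^ 2 * h' ^ (2 * ν * m) * Mk (ν * m) ^ 2 := by
  obtain ⟨C₀, -, l, hl, hG⟩ := hG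
  exact stmt_9_general (by omega) hMpos (by linarith) (by linarith) hM1
    (fun r hr => assocMFinite_of_factorial_le ν hMpos hl hG hr.le) hlam hp₀ hC hL
    fun j => (abs_of_nonneg (ha j)).trans_le (hdecay j)
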